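/- For r ≥ 3 let p_{r,k} = N^C_k(θ_C) be the number of decompositions of the highest root θ_C = (2,2,…,2,1) ∈ ℕ^r of C_r as a sum of exactly k positive roots, and set μ_r = (Σ_k k·p_{r,k})/(Σ_k p_{r,k}) and σ_r = √( (Σ_k k²·p_{r,k})/(Σ_k p_{r,k}) − μ_r² ). Then for every x ∈ ℝ: lim_{r→∞} (Σ_{k ∈ ℕ, k ≤ μ_r + x·σ_r} p_{r,k}) / (Σ_{k≥0} p_{r,k}) = (1/√(2π))·∫_{−∞}^x e^{−u²/2} du. That is, the normalized number of positive roots used in the decompositions of the highest root of C_r converges in distribution to the standard normal as r → ∞. -/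

import Mathlib

open Polynomial

/-- The positive roots of the Lie algebra of type `C_r` in simple-root coordinates
(`1`-based positions): the interval vectors `α[i,j]` for `1 ≤ i ≤ j ≤ r`, the vectors
`γ[i,j]` (value `1` at positions `i..j−1`, value `2` at positions `j..r−1`, value `1` at
position `r`) for `1 ≤ i < j ≤ r−1`, and the highest root `(2,2,…,2,1)`. -/
def isPosRootC (r : ℕ) (v : Fin r → ℕ) : Prop :=
  (∃ i j : ℕ, 1 ≤ i ∧ i ≤ j ∧ j ≤ r ∧
    v = fun t => if i ≤ t.val + 1 ∧ t.val + 1 ≤ j then 1 else 0) ∨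
  (∃ i j : ℕ, 1 ≤ i ∧ i < j ∧ j ≤ r - 1 ∧
    v = fun t => if i ≤ t.val + 1 ∧ t.val + 1 ≤ j - 1 then 1
      else if j ≤ t.val + 1 ∧ t.val + 1 ≤ r - 1 then 2
      else if t.val + 1 = r then 1 else 0) ∨
  (v = fun t => if t.val + 1 ≤ r - 1 then 2 else 1)

/-- `NC r k λ` is the number of decompositions of the weight `λ` as a sum of exactly `k`
positive roots of `C_r`. -/
noncomputable def NC (r k : ℕ) (lam : Fin r → ℕ) : ℕ :=
  Set.ncard {m : (Fin r → ℕ) →₀ ℕ |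
    (∀ v ∈ m.support, isPosRootC r v) ∧
    (m.sum fun _ n => n) = k ∧
    (m.sum fun v n => n • v) = lam}

/-- The highest root `θ_C = (2,2,…,2,1)` of `C_r` in simple-root coordinates. -/
def thetaC (r : ℕ) : Fin r → ℕ := fun t => if t.val + 1 = r then 1 else 2

/-- `pC r k` is the number of decompositions of the highest root of `C_r` as a sum of
exactly `k` positive roots (as a real number). -/
noncomputable def pC (r k : ℕ) : ℝ := (NC r k (thetaC r) : ℝ)

/-- The mean number of positive roots used in the decompositions of the highest root of
`C_r`, each decomposition being equally likely. -/
noncomputable def muC (r : ℕ) : ℝ := (∑' k : ℕ, (k : ℝ) * pC r k) / ∑' k : ℕ, pC r k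

/-- The variance of the number of positive roots used in the decompositions of the
highest root of `C_r`. -/
noncomputable def varC (r : ℕ) : ℝ :=
  (∑' k : ℕ, (k : ℝ) ^ 2 * pC r k) / (∑' k : ℕ, pC r k) - muC r ^ 2

/-!
Decompositions of `θ_C` are peeled off at the last coordinate, where `θ_C` has the value `1`: a
single part meets it, and removing that part leaves a sum of two initial intervals. Peeling such a
sum at its last nonzero coordinate gives a two-term linear recurrence for the generating function
by number of parts. With `y² = q y + 1`, its solution is a combination of `(q + y²)ⁿ`,
`(q + (q - y)²)ⁿ` and a constant, and the first term dominates for `q` near `1`. So the moment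
generating functions of the number of parts are quasi-powers `l(eᶻ)ⁿ A(eᶻ)` with `l = q + y²`, and
Hwang's quasi-powers argument applies: the centred cumulant generating function, rescaled by the
standard deviation, converges to its quadratic Taylor term, whose coefficient is positive because
`(log l(eᶻ))'' = 13/25` at `z = 0`. Lévy's continuity theorem turns this into convergence of
distribution functions.
-/

section VectorPartitions

variable {ι : Type*} {p : (ι → ℕ) → Prop}

theorem sum_apply_eq_zero_iff {m : Multiset (ι → ℕ)} {t : ι} :
    m.sum t = 0 ↔ ∀ u ∈ m, u t = 0 := by
  simp [Pi.multiset_sum_apply, Multiset.sum_eq_zero_iff]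

theorem filter_add_of_apply_eq_zero {s m : Multiset (ι → ℕ)} {t : ι} (hs : ∀ u ∈ s, u t ≠ 0)
    (hm : m.sum t = 0) : (s + m).filter (fun u => u t ≠ 0) = s := by
  rw [Multiset.filter_add, Multiset.filter_eq_self.2 hs, Multiset.filter_eq_nil.2, add_zero]
  exact fun u hu => not_not.2 (sum_apply_eq_zero_iff.1 hm u hu)

theorem card_eq_sum_apply {σ : Multiset (ι → ℕ)} {t : ι} (h : ∀ u ∈ σ, u t = 1) :
    σ.card = σ.sum t := by
  rw [Pi.multiset_sum_apply, Multiset.map_congr rfl h, Multiset.map_const', Multiset.sum_replicate,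
    smul_eq_mul, mul_one]

theorem le_of_mem_of_sum_le {σ : Multiset (ι → ℕ)} {lam u : ι → ℕ} (h : σ.sum ≤ lam)
    (hu : u ∈ σ) : u ≤ lam :=
  (Multiset.single_le_sum (fun _ _ => zero_le) u hu).trans h

theorem multiset_pair_eq_pair_iff {α : Type*} {a b c d : α} :
    ({a, b} : Multiset α) = {c, d} ↔ a = c ∧ b = d ∨ a = d ∧ b = c := by
  classical
  simp only [Multiset.insert_eq_cons, Multiset.cons_eq_cons, Multiset.singleton_inj,
    Multiset.singleton_eq_cons_iff]
  grind

theorem card_le_sum_sum [Fintype ι] {m : Multiset (ι → ℕ)} (h : ∀ v ∈ m, v ≠ 0) :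
    m.card ≤ ∑ t, m.sum t := by
  induction m using Multiset.induction_on with
  | empty => simp
  | cons a s ih =>
    have hs := ih fun v hv => h v (Multiset.mem_cons_of_mem hv)
    obtain ⟨t, ht⟩ := Function.ne_iff.1 (h a (Multiset.mem_cons_self a s))
    have ha : 0 < ∑ t, a t :=
      Finset.sum_pos' (fun _ _ => Nat.zero_le _) ⟨t, Finset.mem_univ t, Nat.pos_of_ne_zero ht⟩
    simp only [Multiset.card_cons, Multiset.sum_cons, Pi.add_apply, Finset.sum_add_distrib]
    omega

theorem finite_setOf_sum_eq [Finite ι] (p : (ι → ℕ) → Prop) (lam : ι → ℕ) :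
    {m : Multiset (ι → ℕ) | (∀ v ∈ m, v ≠ 0 ∧ p v) ∧ m.sum = lam}.Finite := by
  classical
  have := Fintype.ofFinite ι
  refine (Set.finite_Iic ((∑ t, lam t) • (Set.finite_Iic lam).toFinset.val)).subset ?_
  rintro m ⟨hm, rfl⟩
  refine Multiset.le_iff_count.2 fun v => ?_
  by_cases hv : v ∈ m
  · have hle : v ∈ (Set.finite_Iic m.sum).toFinset.val := by
      simpa using Multiset.single_le_sum (fun _ _ => zero_le) v hv
    rw [Multiset.count_nsmul, Multiset.count_eq_one_of_mem (Finset.nodup _) hle, mul_one]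
    exact (Multiset.count_le_card v m).trans (card_le_sum_sum fun v hv => (hm v hv).1)
  · rw [Multiset.count_eq_zero_of_notMem hv]
    exact Nat.zero_le _

variable [Finite ι]

/-- The vector partitions of `lam` with parts in `p`: multisets of nonzero vectors satisfying `p`
with sum `lam`. Excluding the zero vector keeps their number finite for every `p`. -/
noncomputable def vectorPartitions (p : (ι → ℕ) → Prop) (lam : ι → ℕ) :
    Finset (Multiset (ι → ℕ)) :=
  (finite_setOf_sum_eq p lam).toFinset

theorem mem_vectorPartitions {lam : ι → ℕ} {m : Multiset (ι → ℕ)} :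
    m ∈ vectorPartitions p lam ↔ (∀ v ∈ m, v ≠ 0 ∧ p v) ∧ m.sum = lam := by
  simp [vectorPartitions]

theorem vectorPartitions_zero : vectorPartitions p 0 = {0} := by
  ext m
  rw [mem_vectorPartitions, Finset.mem_singleton]
  refine ⟨fun ⟨hm, h0⟩ => ?_, by rintro rfl; simp⟩
  exact Multiset.eq_zero_of_forall_notMem fun v hv =>
    (hm v hv).1 (Multiset.sum_eq_zero_iff.1 h0 v hv)

variable {R : Type*} [CommSemiring R]

/-- The generating function `∑ₘ q ^ |m|` of the vector partitions of `lam` with parts in `p`,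
by number of parts. -/
noncomputable def partitionGF (p : (ι → ℕ) → Prop) (q : R) (lam : ι → ℕ) : R :=
  ∑ m ∈ vectorPartitions p lam, q ^ m.card

theorem partitionGF_zero (q : R) : partitionGF p q 0 = 1 := by
  simp [partitionGF, vectorPartitions_zero]

theorem bijOn_add_vectorPartitions {κ : Type*} {lam : ι → ℕ} {t : ι} {J : Finset κ}
    {s : κ → Multiset (ι → ℕ)}
    (hs : Set.BijOn s J {σ | (∀ u ∈ σ, p u ∧ u t ≠ 0) ∧ σ.sum ≤ lam ∧ σ.sum t = lam t}) :
    Set.BijOn (fun x : Σ _ : κ, Multiset (ι → ℕ) => s x.1 + x.2)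
      (J.sigma fun j => vectorPartitions p (lam - (s j).sum)) (vectorPartitions p lam) := by
  have hfilter : ∀ {j m}, j ∈ J → m ∈ vectorPartitions p (lam - (s j).sum) →
      (s j + m).filter (fun u => u t ≠ 0) = s j := by
    intro j m hj hm
    refine filter_add_of_apply_eq_zero (fun u hu => ((hs.mapsTo hj).1 u hu).2) ?_
    rw [(mem_vectorPartitions.1 hm).2, Pi.sub_apply, (hs.mapsTo hj).2.2, Nat.sub_self]
  refine ⟨?_, ?_, ?_⟩
  · rintro ⟨j, m⟩ hjm
    obtain ⟨hj, hm⟩ := Finset.mem_sigma.1 hjm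
    obtain ⟨hparts, hsum⟩ := mem_vectorPartitions.1 hm
    refine mem_vectorPartitions.2 ⟨fun v hv => (Multiset.mem_add.1 hv).elim (fun hv => ?_)
      (hparts v), by rw [Multiset.sum_add, hsum, add_tsub_cancel_of_le (hs.mapsTo hj).2.1]⟩
    obtain ⟨hpv, hvt⟩ := (hs.mapsTo hj).1 v hv
    exact ⟨fun h0 => hvt (congrFun h0 t), hpv⟩
  · rintro ⟨j, m⟩ hjm ⟨j', m'⟩ hjm' h
    obtain ⟨hj, hm⟩ := Finset.mem_sigma.1 hjm
    obtain ⟨hj', hm'⟩ := Finset.mem_sigma.1 hjm'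
    dsimp only at hj hm hj' hm' h
    obtain rfl : j = j' := hs.injOn hj hj' <| by rw [← hfilter hj hm, ← hfilter hj' hm', h]
    rw [add_left_cancel h]
  · intro m hm
    obtain ⟨hparts, hsum⟩ := mem_vectorPartitions.1 hm
    have hsplit := Multiset.filter_add_not (fun u : ι → ℕ => u t ≠ 0) m
    set σ := m.filter fun u => u t ≠ 0
    set τ := m.filter fun u => ¬ u t ≠ 0
    have hστ : σ.sum + τ.sum = lam := by rw [← Multiset.sum_add, hsplit, hsum]
    have hτ : τ.sum t = 0 :=
      sum_apply_eq_zero_iff.2 fun u hu => not_not.1 (Multiset.mem_filter.1 hu).2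
    obtain ⟨j, hj, hjσ⟩ := hs.surjOn (a := σ)
      ⟨fun u hu => ⟨(hparts u (Multiset.mem_filter.1 hu).1).2, (Multiset.mem_filter.1 hu).2⟩,
        hστ ▸ le_self_add, by simp [← hστ, hτ]⟩
    refine ⟨⟨j, τ⟩, Finset.mem_sigma.2 ⟨hj, mem_vectorPartitions.2
      ⟨fun u hu => hparts u (Multiset.mem_filter.1 hu).1, ?_⟩⟩, by simpa only [hjσ] using hsplit⟩
    rw [← hστ, hjσ, add_tsub_cancel_left]

theorem partitionGF_eq_sum_peel {κ : Type*} (q : R) {lam : ι → ℕ} {t : ι} {J : Finset κ}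
    {s : κ → Multiset (ι → ℕ)}
    (hs : Set.BijOn s J {σ | (∀ u ∈ σ, p u ∧ u t ≠ 0) ∧ σ.sum ≤ lam ∧ σ.sum t = lam t}) :
    partitionGF p q lam = ∑ j ∈ J, q ^ (s j).card * partitionGF p q (lam - (s j).sum) := by
  have h := bijOn_add_vectorPartitions hs
  simp only [partitionGF, Finset.mul_sum, ← pow_add, ← Multiset.card_add, Finset.sum_sigma']
  exact (Finset.sum_nbij _ h.mapsTo h.injOn h.surjOn fun _ _ => rfl).symm

theorem partitionGF_of_apply_eq_one {κ : Type*} (q : R) {lam : ι → ℕ} {t : ι} (hlam : lam t = 1)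
    {J : Finset κ} {s : κ → ι → ℕ} (hs : Set.BijOn s J {u | p u ∧ u t ≠ 0 ∧ u ≤ lam}) :
    partitionGF p q lam = q * ∑ j ∈ J, partitionGF p q (lam - s j) := by
  have hone : ∀ u : ι → ℕ, u t ≠ 0 → u ≤ lam → u t = 1 := fun u hu hle =>
    le_antisymm (hlam ▸ hle t) (Nat.one_le_iff_ne_zero.2 hu)
  have hbij : Set.BijOn (fun j => ({s j} : Multiset (ι → ℕ))) J
      {σ | (∀ u ∈ σ, p u ∧ u t ≠ 0) ∧ σ.sum ≤ lam ∧ σ.sum t = lam t} := by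
    refine ⟨fun j hj => ?_, fun i hi j hj hij => hs.injOn hi hj (Multiset.singleton_inj.1 hij), ?_⟩
    · obtain ⟨hp, ht, hle⟩ := hs.mapsTo hj
      simp [hp, hle, hlam, hone _ ht hle]
    · rintro σ ⟨hσ, hle, ht⟩
      obtain ⟨u, rfl⟩ : ∃ u, σ = {u} := by
        rw [← Multiset.card_eq_one, ← hlam, ← ht]
        exact card_eq_sum_apply fun u hu => hone u (hσ u hu).2 (le_of_mem_of_sum_le hle hu)
      have hu := Multiset.mem_singleton_self u
      obtain ⟨j, hj, rfl⟩ := hs.surjOn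
        ⟨(hσ u hu).1, (hσ u hu).2, le_of_mem_of_sum_le hle hu⟩
      exact ⟨j, hj, rfl⟩
  simpa [Finset.mul_sum] using partitionGF_eq_sum_peel q hbij

theorem partitionGF_of_apply_eq_two {κ : Type*} [LinearOrder κ] (q : R) {lam : ι → ℕ} {t : ι}
    (hlam : lam t = 2) {J : Finset κ} {s : κ → ι → ℕ}
    (hs : Set.BijOn s J {u | p u ∧ u t ≠ 0 ∧ u ≤ lam}) (hone : ∀ j ∈ J, s j t = 1)
    (hadd : ∀ i ∈ J, ∀ j ∈ J, s i + s j ≤ lam) :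
    partitionGF p q lam =
      q ^ 2 * ∑ j ∈ J, ∑ i ∈ J with i ≤ j, partitionGF p q (lam - (s i + s j)) := by
  have hbij : Set.BijOn (fun x : Σ _ : κ, κ => ({s x.2, s x.1} : Multiset (ι → ℕ)))
      (J.sigma fun j => {i ∈ J | i ≤ j})
      {σ | (∀ u ∈ σ, p u ∧ u t ≠ 0) ∧ σ.sum ≤ lam ∧ σ.sum t = lam t} := by
    refine ⟨?_, ?_, ?_⟩
    · rintro ⟨j, i⟩ hx
      obtain ⟨hj, hi, -⟩ : j ∈ J ∧ i ∈ J ∧ i ≤ j := by simpa using hx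
      simp [(hs.mapsTo hi).1, (hs.mapsTo hj).1, hone i hi, hone j hj, hlam, hadd i hi j hj]
    · rintro ⟨j, i⟩ hx ⟨j', i'⟩ hx' h
      obtain ⟨hj, hi, hij⟩ : j ∈ J ∧ i ∈ J ∧ i ≤ j := by simpa using hx
      obtain ⟨hj', hi', hij'⟩ : j' ∈ J ∧ i' ∈ J ∧ i' ≤ j' := by simpa using hx'
      rcases multiset_pair_eq_pair_iff.1 h with ⟨h₁, h₂⟩ | ⟨h₁, h₂⟩
      · rw [hs.injOn hi hi' h₁, hs.injOn hj hj' h₂]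
      · obtain rfl := hs.injOn hi hj' h₁
        obtain rfl := hs.injOn hj hi' h₂
        rw [le_antisymm hij hij']
    · rintro σ ⟨hσ, hle, ht⟩
      have hmem : ∀ u ∈ σ, ∃ j ∈ J, s j = u := fun u hu =>
        hs.surjOn ⟨(hσ u hu).1, (hσ u hu).2, le_of_mem_of_sum_le hle hu⟩
      obtain ⟨u, v, rfl⟩ : ∃ u v, σ = {u, v} := by
        rw [← Multiset.card_eq_two, ← hlam, ← ht]
        exact card_eq_sum_apply fun u hu => by obtain ⟨j, hj, rfl⟩ := hmem u hu; exact hone j hj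
      obtain ⟨i, hi, rfl⟩ := hmem u (by simp)
      obtain ⟨j, hj, rfl⟩ := hmem v (by simp)
      rcases le_total i j with hij | hij
      · exact ⟨⟨j, i⟩, by simp [hi, hj, hij], rfl⟩
      · exact ⟨⟨i, j⟩, by simp [hi, hj, hij], Multiset.pair_comm _ _⟩
  simpa [Finset.mul_sum, Finset.sum_sigma] using partitionGF_eq_sum_peel q hbij

end VectorPartitions

section TypeC

/-- The indicator vector of the first `n` simple roots of `C_r`. An interval root is a difference
of two such vectors. -/
def prefixVec (r n : ℕ) : Fin r → ℕ := fun t => if t.val < n then 1 else 0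

theorem prefixVec_zero (r : ℕ) : prefixVec r 0 = 0 := by
  funext t
  simp [prefixVec]

theorem prefixVec_mono (r : ℕ) : Monotone (prefixVec r) := by
  intro m n hmn t
  simp only [prefixVec]
  split_ifs <;> omega

theorem bijOn_prefixVec_sub {r a n : ℕ} (hn : n + 1 < r) (ha : a ≤ n + 1) :
    Set.BijOn (fun i => prefixVec r (n + 1) - prefixVec r i) (Finset.range (n + 1))
      {u | isPosRootC r u ∧ u ⟨n, by omega⟩ ≠ 0 ∧ u ≤ prefixVec r a + prefixVec r (n + 1)} := by
  refine ⟨fun i hi => ⟨Or.inl ⟨i + 1, n + 1, ?_⟩, ?_, ?_⟩, fun i hi j hj hij => ?_, ?_⟩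
  · have hi : i < n + 1 := by simpa using hi
    refine ⟨by omega, by omega, by omega, funext fun t => ?_⟩
    simp only [prefixVec, Pi.sub_apply]
    split_ifs <;> omega
  · have hi : i < n + 1 := by simpa using hi
    simp only [prefixVec, Pi.sub_apply]
    split_ifs <;> omega
  · exact tsub_le_self.trans le_add_self
  · have hi : i < n + 1 := by simpa using hi
    have hj : j < n + 1 := by simpa using hj
    have h₁ := congrFun hij ⟨i, by omega⟩
    have h₂ := congrFun hij ⟨j, by omega⟩
    simp only [prefixVec, Pi.sub_apply] at h₁ h₂
    split_ifs at h₁ h₂ <;> omega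
  · rintro u ⟨hu, hun, hle⟩
    have hlast := hle ⟨r - 1, by omega⟩
    have hnext := hle ⟨n + 1, hn⟩
    simp only [prefixVec, Pi.add_apply] at hlast hnext
    rcases hu with ⟨i, j, hi, hij, hj, rfl⟩ | ⟨i, j, hi, hij, hj, rfl⟩ | rfl
    · obtain rfl : j = n + 1 := by
        simp only at hun hnext
        split_ifs at hun hnext <;> omega
      refine ⟨i - 1, by simp; omega, funext fun t => ?_⟩
      simp only [prefixVec, Pi.sub_apply]
      split_ifs <;> omega
    · simp only at hlast
      split_ifs at hlast <;> omega
    · simp only at hlast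
      split_ifs at hlast <;> omega

/-- The pairs `i ≤ j`, stored as `⟨j, i⟩`, for which `θ_C - (prefixVec i + prefixVec j)` is a
positive root of `C_{n+2}`: the two extreme diagonal pairs and all `i < j ≤ n + 1`. -/
def topRootPairs (n : ℕ) : Finset (Σ _ : ℕ, ℕ) :=
  insert ⟨0, 0⟩ (insert ⟨n + 1, n + 1⟩ ((Finset.range (n + 2)).sigma fun j => Finset.range j))

theorem mem_topRootPairs {n i j : ℕ} :
    (⟨j, i⟩ : Σ _ : ℕ, ℕ) ∈ topRootPairs n ↔
      i ≤ j ∧ j ≤ n + 1 ∧ (i = j → j = 0 ∨ j = n + 1) := by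
  simp only [topRootPairs, Finset.mem_insert, Sigma.ext_iff, heq_eq_eq, Finset.mem_sigma,
    Finset.mem_range]
  omega

theorem isPosRootC_thetaC_sub {n i j : ℕ} (hij : i ≤ j) (hj : j ≤ n + 1)
    (hdiag : i = j → j = 0 ∨ j = n + 1) :
    isPosRootC (n + 2) (thetaC (n + 2) - (prefixVec (n + 2) i + prefixVec (n + 2) j)) := by
  by_cases hlast : j = n + 1
  · refine Or.inl ⟨i + 1, n + 2, by omega, by omega, le_rfl, funext fun t => ?_⟩
    simp only [thetaC, prefixVec, Pi.sub_apply, Pi.add_apply]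
    split_ifs <;> omega
  by_cases hij' : i = j
  · refine Or.inr (Or.inr (funext fun t => ?_))
    simp only [thetaC, prefixVec, Pi.sub_apply, Pi.add_apply]
    split_ifs <;> omega
  · refine Or.inr (Or.inl ⟨i + 1, j + 1, by omega, by omega, by omega, funext fun t => ?_⟩)
    simp only [thetaC, prefixVec, Pi.sub_apply, Pi.add_apply]
    split_ifs <;> omega

theorem bijOn_thetaC_sub (n : ℕ) :
    Set.BijOn
      (fun x : Σ _ : ℕ, ℕ => thetaC (n + 2) - (prefixVec (n + 2) x.2 + prefixVec (n + 2) x.1))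
      (topRootPairs n)
      {u | isPosRootC (n + 2) u ∧ u (Fin.last (n + 1)) ≠ 0 ∧ u ≤ thetaC (n + 2)} := by
  refine ⟨?_, ?_, ?_⟩
  · rintro ⟨j, i⟩ hx
    obtain ⟨hij, hj, hdiag⟩ := mem_topRootPairs.1 hx
    refine ⟨isPosRootC_thetaC_sub hij hj hdiag, ?_, tsub_le_self⟩
    simp only [thetaC, prefixVec, Pi.sub_apply, Pi.add_apply, Fin.val_last]
    split_ifs <;> omega
  · rintro ⟨j, i⟩ hx ⟨j', i'⟩ hx' h
    obtain ⟨hij, hj, -⟩ := mem_topRootPairs.1 hx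
    obtain ⟨hij', hj', -⟩ := mem_topRootPairs.1 hx'
    have h₁ := congrFun h ⟨i, by omega⟩
    have h₂ := congrFun h ⟨j, by omega⟩
    have h₃ := congrFun h ⟨i', by omega⟩
    have h₄ := congrFun h ⟨j', by omega⟩
    simp only [thetaC, prefixVec, Pi.sub_apply, Pi.add_apply] at h₁ h₂ h₃ h₄
    obtain ⟨rfl, rfl⟩ : i = i' ∧ j = j' := by grind
    rfl
  · rintro u ⟨hu, hlast, -⟩
    rcases hu with ⟨i, j, hi, hij, hj, rfl⟩ | ⟨i, j, hi, hij, hj, rfl⟩ | rfl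
    · simp only [Fin.val_last] at hlast
      refine ⟨⟨n + 1, i - 1⟩, mem_topRootPairs.2 (by omega), funext fun t => ?_⟩
      simp only [thetaC, prefixVec, Pi.sub_apply, Pi.add_apply]
      split_ifs at * <;> omega
    · refine ⟨⟨j - 1, i - 1⟩, mem_topRootPairs.2 (by omega), funext fun t => ?_⟩
      simp only [thetaC, prefixVec, Pi.sub_apply, Pi.add_apply]
      split_ifs <;> omega
    · refine ⟨⟨0, 0⟩, mem_topRootPairs.2 (by omega), funext fun t => ?_⟩
      simp only [thetaC, prefixVec, Pi.sub_apply, Pi.add_apply]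
      split_ifs <;> omega

variable {R : Type*}

section CommSemiring

variable [CommSemiring R]

/-- The generating function, by number of parts, of the decompositions into positive roots of `C_r`
of a sum of two prefix vectors. Peeling off the last nonzero coordinate of such a weight gives
weights of the same form. -/
noncomputable def prefixPairGF (r : ℕ) (q : R) (a n : ℕ) : R :=
  partitionGF (isPosRootC r) q (prefixVec r a + prefixVec r n)

theorem prefixPairGF_comm (r : ℕ) (q : R) (a n : ℕ) :
    prefixPairGF r q a n = prefixPairGF r q n a := by
  rw [prefixPairGF, add_comm, prefixPairGF]

theorem prefixPairGF_zero_zero (r : ℕ) (q : R) : prefixPairGF r q 0 0 = 1 := by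
  rw [prefixPairGF, prefixVec_zero, add_zero, partitionGF_zero]

theorem prefixVec_tsub_tsub {r i n : ℕ} (h : i ≤ n) :
    prefixVec r n - (prefixVec r n - prefixVec r i) = prefixVec r i :=
  tsub_tsub_cancel_of_le (prefixVec_mono r h)

theorem prefixPairGF_succ {r a n : ℕ} (q : R) (hn : n + 1 < r) (ha : a ≤ n) :
    prefixPairGF r q a (n + 1) = q * ∑ i ∈ Finset.range (n + 1), prefixPairGF r q a i := by
  rw [prefixPairGF, partitionGF_of_apply_eq_one q (by simp [prefixVec, ha])
    (bijOn_prefixVec_sub hn (by omega))]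
  refine congrArg (q * ·) (Finset.sum_congr rfl fun i hi => ?_)
  rw [prefixPairGF, add_tsub_assoc_of_le tsub_le_self,
    prefixVec_tsub_tsub (Finset.mem_range.1 hi).le]

theorem prefixPairGF_succ_succ {r n : ℕ} (q : R) (hn : n + 1 < r) :
    prefixPairGF r q (n + 1) (n + 1) =
      q ^ 2 * ∑ j ∈ Finset.range (n + 1), ∑ i ∈ Finset.range (j + 1), prefixPairGF r q i j := by
  rw [prefixPairGF, partitionGF_of_apply_eq_two q (by simp [prefixVec])
    (bijOn_prefixVec_sub hn le_rfl) ?_ fun i _ j _ => add_le_add tsub_le_self tsub_le_self]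
  · refine congrArg (q ^ 2 * ·) (Finset.sum_congr rfl fun j hj => ?_)
    have hj := Finset.mem_range.1 hj
    have hfilter : {i ∈ Finset.range (n + 1) | i ≤ j} = Finset.range (j + 1) := by
      ext i
      simp only [Finset.mem_filter, Finset.mem_range]
      omega
    rw [hfilter]
    refine Finset.sum_congr rfl fun i hi => ?_
    have hi : i < j + 1 := Finset.mem_range.1 hi
    rw [prefixPairGF, ← tsub_add_tsub_comm tsub_le_self tsub_le_self,
      prefixVec_tsub_tsub (by omega), prefixVec_tsub_tsub hj.le]
  · intro i hi
    have hi : i < n + 1 := Finset.mem_range.1 hi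
    simp only [prefixVec, Pi.sub_apply]
    split_ifs <;> omega

/-- The diagonal value `prefixPairGF r q (n + 1) (n + 1)` and the row sum
`∑ i ≤ n, prefixPairGF r q i (n + 1)`, given by the recursion they satisfy, in which `r` does not
occur. -/
def diagRowSum (q : R) : ℕ → R × R
  | 0 => (q ^ 2, q)
  | n + 1 => ((diagRowSum q n).1 + q ^ 2 * ((diagRowSum q n).1 + (diagRowSum q n).2),
      q * (diagRowSum q n).1 + (1 + 2 * q) * (diagRowSum q n).2)

theorem prefixPairGF_row_add_two {r n : ℕ} (q : R) (hn : n + 2 < r) :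
    ∑ i ∈ Finset.range (n + 2), prefixPairGF r q i (n + 2) =
      q * prefixPairGF r q (n + 1) (n + 1) +
        (1 + 2 * q) * ∑ i ∈ Finset.range (n + 1), prefixPairGF r q i (n + 1) := by
  have hrow : ∀ m, m + 1 < r → ∑ i ∈ Finset.range (m + 1), prefixPairGF r q i (m + 1) =
      q * ∑ i ∈ Finset.range (m + 1), ∑ j ∈ Finset.range (m + 1), prefixPairGF r q i j :=
    fun m hm => by
      rw [Finset.mul_sum]
      exact Finset.sum_congr rfl fun i hi =>
        prefixPairGF_succ q hm (Nat.lt_succ_iff.1 (Finset.mem_range.1 hi))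
  rw [hrow (n + 1) hn, Finset.sum_range_succ]
  simp only [Finset.sum_range_succ _ (n + 1), Finset.sum_add_distrib, mul_add]
  rw [← hrow n (by omega), Finset.sum_congr rfl fun j _ => prefixPairGF_comm r q (n + 1) j]
  ring

theorem prefixPairGF_diag_add_two {r n : ℕ} (q : R) (hn : n + 2 < r) :
    prefixPairGF r q (n + 2) (n + 2) =
      prefixPairGF r q (n + 1) (n + 1) + q ^ 2 * (prefixPairGF r q (n + 1) (n + 1) +
        ∑ i ∈ Finset.range (n + 1), prefixPairGF r q i (n + 1)) := by
  rw [prefixPairGF_succ_succ q hn, Finset.sum_range_succ, mul_add, ← prefixPairGF_succ_succ q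
    (by omega), Finset.sum_range_succ, add_comm (prefixPairGF r q (n + 1) (n + 1)) (∑ i ∈ _, _)]

theorem prefixPairGF_eq_diagRowSum {r : ℕ} (q : R) (n : ℕ) (hn : n + 1 < r) :
    prefixPairGF r q (n + 1) (n + 1) = (diagRowSum q n).1 ∧
      ∑ i ∈ Finset.range (n + 1), prefixPairGF r q i (n + 1) = (diagRowSum q n).2 := by
  induction n with
  | zero =>
    simp [prefixPairGF_succ_succ q hn, prefixPairGF_succ q hn, prefixPairGF_zero_zero, diagRowSum]
  | succ n ih =>
    obtain ⟨hdiag, hrow⟩ := ih (by omega)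
    rw [prefixPairGF_diag_add_two q hn, prefixPairGF_row_add_two q hn, hdiag, hrow]
    exact ⟨rfl, rfl⟩

theorem sum_topRootPairs {M : Type*} [AddCommMonoid M] (n : ℕ) (f : (Σ _ : ℕ, ℕ) → M) :
    ∑ x ∈ topRootPairs n, f x =
      f ⟨0, 0⟩ + (f ⟨n + 1, n + 1⟩ +
        ∑ j ∈ Finset.range (n + 2), ∑ i ∈ Finset.range j, f ⟨j, i⟩) := by
  rw [topRootPairs, Finset.sum_insert (by simp), Finset.sum_insert (by simp), Finset.sum_sigma]

theorem partitionGF_thetaC (q : R) (n : ℕ) :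
    partitionGF (isPosRootC (n + 2)) q (thetaC (n + 2)) =
      q * (1 + ((diagRowSum q n).1 + ∑ k ∈ Finset.range (n + 1), (diagRowSum q k).2)) := by
  have hterm : ∀ x ∈ topRootPairs n, partitionGF (isPosRootC (n + 2)) q (thetaC (n + 2) -
      (thetaC (n + 2) - (prefixVec (n + 2) x.2 + prefixVec (n + 2) x.1))) =
        prefixPairGF (n + 2) q x.2 x.1 := by
    rintro ⟨j, i⟩ hx
    have := mem_topRootPairs.1 hx
    rw [prefixPairGF, tsub_tsub_cancel_of_le]
    intro t
    simp only [thetaC, prefixVec, Pi.add_apply]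
    split_ifs <;> omega
  rw [partitionGF_of_apply_eq_one q (by simp [thetaC]) (bijOn_thetaC_sub n),
    Finset.sum_congr rfl hterm]
  rw [sum_topRootPairs, prefixPairGF_zero_zero,
    (prefixPairGF_eq_diagRowSum q n (Nat.lt_succ_self _)).1, Finset.sum_range_succ',
    Finset.sum_range_zero, add_zero]
  refine congrArg (fun s => q * (1 + (_ + s))) (Finset.sum_congr rfl fun k hk => ?_)
  have := Finset.mem_range.1 hk
  exact (prefixPairGF_eq_diagRowSum q k (by omega)).2

end CommSemiring

section CommRing

variable [CommRing R] (q : R)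

theorem mul_partitionGF_thetaC_sub (n : ℕ) :
    q * (partitionGF (isPosRootC (n + 2)) q (thetaC (n + 2)) - q) =
      (q ^ 2 - 1) * (diagRowSum q n).1 + (q + q ^ 2) * (diagRowSum q n).2 := by
  induction n with
  | zero =>
    simp only [partitionGF_thetaC, diagRowSum, Finset.sum_range_one, zero_add]
    ring
  | succ n ih =>
    simp only [partitionGF_thetaC, diagRowSum, Finset.sum_range_succ _ (n + 1)] at ih ⊢
    linear_combination ih

theorem partitionGF_thetaC_succ (n : ℕ) :
    partitionGF (isPosRootC (n + 3)) q (thetaC (n + 3)) =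
      partitionGF (isPosRootC (n + 2)) q (thetaC (n + 2)) +
        q * (1 + q) * (q * (diagRowSum q n).1 + (1 + q) * (diagRowSum q n).2) := by
  simp only [partitionGF_thetaC, diagRowSum, Finset.sum_range_succ _ (n + 1)]
  ring

theorem partitionGF_thetaC_add_two (n : ℕ) :
    partitionGF (isPosRootC (n + 4)) q (thetaC (n + 4)) - q =
      (2 + 2 * q + q ^ 2) * (partitionGF (isPosRootC (n + 3)) q (thetaC (n + 3)) - q) -
        (1 + 2 * q + q ^ 2 + q ^ 3) *
          (partitionGF (isPosRootC (n + 2)) q (thetaC (n + 2)) - q) := by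
  rw [partitionGF_thetaC_succ q (n + 1), partitionGF_thetaC_succ q n]
  simp only [diagRowSum]
  linear_combination q ^ 2 * mul_partitionGF_thetaC_sub q n

/-- The roots of the characteristic polynomial of the recursion are `q + y ^ 2`, with `y` running
over the two roots of `y ^ 2 = q * y + 1`. -/
theorem mul_partitionGF_thetaC_sub_eq {y : R} (hy : y ^ 2 = q * y + 1) (n : ℕ) :
    (2 * y - q) * (partitionGF (isPosRootC (n + 2)) q (thetaC (n + 2)) - q) =
      q * (1 + q) * (y ^ 2 * (q + y ^ 2) ^ n - (q - y) ^ 2 * (q + (q - y) ^ 2) ^ n) := by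
  induction n using Nat.twoStepInduction with
  | zero =>
    simp only [partitionGF_thetaC, diagRowSum, zero_add, Finset.sum_range_one, pow_zero]
    ring
  | one =>
    simp only [partitionGF_thetaC, diagRowSum, Finset.sum_range_succ, Finset.sum_range_zero]
    linear_combination (-2 * q ^ 2 * (1 + q) * (2 * y - q)) * hy
  | more n ih₀ ih₁ =>
    have hroot : ∀ w : R, w ^ 2 = q * w + 1 → (q + w ^ 2) ^ (n + 2) =
        (2 + 2 * q + q ^ 2) * (q + w ^ 2) ^ (n + 1) -
          (1 + 2 * q + q ^ 2 + q ^ 3) * (q + w ^ 2) ^ n := by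
      intro w hw
      linear_combination (w ^ 2 - 1 + q * w) * (q + w ^ 2) ^ n * hw
    rw [partitionGF_thetaC_add_two, hroot y hy, hroot (q - y) (by linear_combination hy)]
    linear_combination (2 + 2 * q + q ^ 2) * ih₁ - (1 + 2 * q + q ^ 2 + q ^ 3) * ih₀

end CommRing

theorem ne_zero_of_isPosRootC {r : ℕ} (hr : r ≠ 0) {v : Fin r → ℕ} (hv : isPosRootC r v) :
    v ≠ 0 := by
  rintro rfl
  rcases hv with ⟨i, j, hi, hij, hj, h⟩ | ⟨i, j, hi, hij, hj, h⟩ | h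
  · have := congrFun h ⟨i - 1, by omega⟩
    simp only [Pi.zero_apply] at this
    split_ifs at this
    omega
  · have := congrFun h ⟨r - 1, by omega⟩
    simp only [Pi.zero_apply] at this
    split_ifs at this
    omega
  · have := congrFun h ⟨r - 1, by omega⟩
    simp only [Pi.zero_apply] at this
    split_ifs at this

theorem NC_eq_card_filter {r : ℕ} (hr : r ≠ 0) (k : ℕ) (lam : Fin r → ℕ) :
    NC r k lam = {m ∈ vectorPartitions (isPosRootC r) lam | m.card = k}.card := by
  rw [NC, ← Set.ncard_coe_finset,
    ← Set.ncard_image_of_injective _ (Multiset.toFinsupp (α := Fin r → ℕ)).injective]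
  congr 1
  ext m
  obtain ⟨m, rfl⟩ := (Multiset.toFinsupp (α := Fin r → ℕ)).surjective m
  rw [Multiset.toFinsupp.injective.mem_set_image]
  have hsum : ((Multiset.toFinsupp m).sum fun v n => n • v) = m.sum := by
    rw [← Finsupp.sum_toMultiset, Multiset.toFinsupp_toMultiset]
  have hparts : (∀ v ∈ m, v ≠ 0 ∧ isPosRootC r v) ↔ ∀ v ∈ m, isPosRootC r v :=
    forall₂_congr fun v _ => and_iff_right_of_imp (ne_zero_of_isPosRootC hr)
  simp only [Set.mem_ofPred_eq, Finset.coe_filter, mem_vectorPartitions, hparts, hsum,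
    Multiset.toFinsupp_support, Multiset.mem_toFinset]
  rw [and_assoc, and_comm (a := m.sum = lam), ← Multiset.toFinsupp_sum_eq]
  rfl

theorem tsum_mul_pC {r : ℕ} (hr : r ≠ 0) (φ : ℕ → ℝ) :
    ∑' k, φ k * pC r k = ∑ m ∈ vectorPartitions (isPosRootC r) (thetaC r), φ m.card := by
  have hpC : ∀ k, pC r k = {m ∈ vectorPartitions (isPosRootC r) (thetaC r) | m.card = k}.card :=
    fun k => congrArg Nat.cast (NC_eq_card_filter hr k _)
  rw [Finset.sum_comp φ Multiset.card, tsum_eq_sum fun k hk => ?_]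
  · exact Finset.sum_congr rfl fun k _ => by rw [hpC, nsmul_eq_mul, mul_comm]
  · rw [hpC, Finset.filter_eq_empty_iff.2 fun m hm h =>
      hk (Finset.mem_image.2 ⟨m, hm, h⟩), Finset.card_empty, Nat.cast_zero, mul_zero]

end TypeC

section Cumulants

open MeasureTheory ProbabilityTheory Filter
open scoped Topology

variable {Ω : Type*} [MeasurableSpace Ω] {μ : Measure Ω} {X : Ω → ℝ}

theorem mem_interior_integrableExpSet_of_complexMGF_ne_zero (hX : AEMeasurable X μ) {x : ℝ}
    (h : ∀ᶠ z in 𝓝 (x : ℂ), complexMGF X μ z ≠ 0) : x ∈ interior (integrableExpSet X μ) := by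
  rw [mem_interior_iff_mem_nhds]
  filter_upwards [(Complex.continuous_ofReal.tendsto x).eventually h] with u hu
  by_contra hint
  exact hu (complexMGF_undef hX hint)

theorem deriv_and_deriv_deriv_eq_of_complexMGF_eq_exp [IsProbabilityMeasure μ]
    (hX : AEMeasurable X μ) {f : ℂ → ℂ} (hf : AnalyticAt ℂ f 0)
    (h : complexMGF X μ =ᶠ[𝓝 0] fun z => Complex.exp (f z)) :
    deriv f 0 = (∫ ω, X ω ∂μ : ℝ) ∧ deriv (deriv f) 0 = (Var[X; μ] : ℝ) := by
  have h0 : (0 : ℝ) ∈ interior (integrableExpSet X μ) :=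
    mem_interior_integrableExpSet_of_complexMGF_ne_zero hX <|
      h.mono fun z hz => hz ▸ Complex.exp_ne_zero _
  have hexp : Complex.exp (f 0) = 1 := by simpa [complexMGF] using h.self_of_nhds.symm
  have hderiv : deriv (complexMGF X μ) =ᶠ[𝓝 0] fun z => Complex.exp (f z) * deriv f z :=
    h.deriv.trans <| hf.eventually_analyticAt.mono fun z hz => deriv_cexp hz.differentiableAt
  have hmean : deriv f 0 = (∫ ω, X ω ∂μ : ℝ) := by
    have := iteratedDeriv_complexMGF (z := 0) h0 1
    simpa [hderiv.self_of_nhds, hexp, integral_complex_ofReal] using this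
  have hsecond : deriv f 0 ^ 2 + deriv (deriv f) 0 = (∫ ω, (X ^ 2) ω ∂μ : ℝ) := by
    have hprod : deriv (fun z => Complex.exp (f z) * deriv f z) 0
        = deriv f 0 ^ 2 + deriv (deriv f) 0 := by
      rw [deriv_fun_mul hf.differentiableAt.cexp hf.deriv.differentiableAt,
        deriv_cexp hf.differentiableAt, hexp]
      ring
    have := iteratedDeriv_complexMGF (z := 0) h0 2
    rw [iteratedDeriv_succ, iteratedDeriv_one, hderiv.deriv_eq, hprod] at this
    simpa only [Complex.ofReal_zero, zero_mul, Complex.exp_zero, mul_one, Pi.pow_apply,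
      ← Complex.ofReal_pow, integral_complex_ofReal] using this
  refine ⟨hmean, ?_⟩
  rw [variance_eq_sub (memLp_of_mem_interior_integrableExpSet h0 2), Complex.ofReal_sub, ← hsecond,
    Complex.ofReal_pow, ← hmean]
  ring

end Cumulants

section QuadraticApproximation

open Filter Asymptotics Metric
open scoped Topology

theorem norm_sub_quadratic_le {g : ℂ → ℂ} {v : ℂ} {δ ε : ℝ}
    (hg : DifferentiableOn ℂ g (ball 0 δ))
    (hbound : ∀ w ∈ ball (0 : ℂ) δ, ‖deriv (deriv g) w - v‖ ≤ ε) {z : ℂ} (hz : z ∈ ball 0 δ) :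
    ‖g z - (g 0 + deriv g 0 * z + v / 2 * z ^ 2)‖ ≤ ε * ‖z‖ ^ 2 := by
  have hsub : closedBall 0 ‖z‖ ⊆ ball (0 : ℂ) δ := closedBall_subset_ball (by simpa using hz)
  have h0 : (0 : ℂ) ∈ closedBall 0 ‖z‖ := by simp
  have hg1 : ∀ w ∈ ball (0 : ℂ) δ, HasDerivAt g (deriv g w) w := fun w hw =>
    (hg.differentiableAt (isOpen_ball.mem_nhds hw)).hasDerivAt
  have hg2 : ∀ w ∈ ball (0 : ℂ) δ, HasDerivAt (deriv g) (deriv (deriv g) w) w := fun w hw =>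
    ((hg.deriv isOpen_ball).differentiableAt (isOpen_ball.mem_nhds hw)).hasDerivAt
  have hfirst : ∀ w ∈ closedBall (0 : ℂ) ‖z‖, ‖deriv g w - deriv g 0 - v * w‖ ≤ ε * ‖z‖ := by
    intro w hw
    have hε : 0 ≤ ε := (norm_nonneg _).trans (hbound w (hsub hw))
    have := (convex_closedBall (0 : ℂ) ‖z‖).norm_image_sub_le_of_norm_hasDerivWithin_le
      (f := fun w => deriv g w - v * w)
      (fun u hu => ((hg2 u (hsub hu)).sub ((hasDerivAt_id u).const_mul v)).hasDerivWithinAt)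
      (fun u hu => by simpa using hbound u (hsub hu)) h0 hw
    calc ‖deriv g w - deriv g 0 - v * w‖
        = ‖deriv g w - v * w - (deriv g 0 - v * 0)‖ := by congr 1; ring
      _ ≤ ε * ‖w - 0‖ := this
      _ ≤ ε * ‖z‖ := by rw [sub_zero]; gcongr; simpa using hw
  have := (convex_closedBall (0 : ℂ) ‖z‖).norm_image_sub_le_of_norm_hasDerivWithin_le
    (f := fun w => g w - (deriv g 0 * w + v / 2 * w ^ 2))
    (f' := fun w => deriv g w - deriv g 0 - v * w)
    (fun u hu => by
      refine (((hg1 u (hsub hu)).sub (((hasDerivAt_id u).const_mul _).add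
        ((hasDerivAt_pow 2 u).const_mul (v / 2)))).congr_deriv ?_).hasDerivWithinAt
      push_cast
      ring)
    hfirst h0 (y := z) (by simp)
  calc ‖g z - (g 0 + deriv g 0 * z + v / 2 * z ^ 2)‖
      = ‖g z - (deriv g 0 * z + v / 2 * z ^ 2) - (g 0 - (deriv g 0 * 0 + v / 2 * 0 ^ 2))‖ := by
        congr 1; ring
    _ ≤ ε * ‖z‖ * ‖z - 0‖ := this
    _ = ε * ‖z‖ ^ 2 := by rw [sub_zero]; ring

theorem isLittleO_sub_quadratic {ι : Type*} {l : Filter ι} {U : Set ℂ} (hU : IsOpen U)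
    (h0 : 0 ∈ U) {g : ι → ℂ → ℂ} {ψ : ℂ → ℂ} (hg : ∀ᶠ n in l, DifferentiableOn ℂ (g n) U)
    (hlim : TendstoLocallyUniformlyOn g ψ l U) {z : ι → ℂ} (hz : Tendsto z l (𝓝 0)) :
    (fun n => g n (z n) - (g n 0 + deriv (g n) 0 * z n + deriv (deriv ψ) 0 / 2 * z n ^ 2))
      =o[l] fun n => z n ^ 2 := by
  rcases l.eq_or_neBot with rfl | hl
  · simp
  have hψ : ContinuousAt (deriv (deriv ψ)) 0 :=
    ((((hlim.differentiableOn hg hU).deriv hU).deriv hU).differentiableAt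
      (hU.mem_nhds h0)).continuousAt
  have hlim2 : TendstoLocallyUniformlyOn (fun n => deriv (deriv (g n))) (deriv (deriv ψ)) l U :=
    (hlim.deriv hg hU).deriv (hg.mono fun n hn => hn.deriv hU) hU
  refine isLittleO_iff.2 fun ε hε => ?_
  obtain ⟨t, ht, hunif⟩ := Metric.tendstoLocallyUniformlyOn_iff.1 hlim2 (ε / 2) (half_pos hε) 0 h0
  rw [hU.nhdsWithin_eq h0] at ht
  obtain ⟨δ, hδ, hball⟩ := Metric.mem_nhds_iff.1 <|
    inter_mem (inter_mem ht (hU.mem_nhds h0)) (hψ (ball_mem_nhds _ (half_pos hε)))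
  filter_upwards [hg, hunif, hz (ball_mem_nhds 0 hδ)] with n hgn hn hzn
  rw [norm_pow (z n)]
  refine norm_sub_quadratic_le (hgn.mono fun w hw => (hball hw).1.2) (fun w hw => ?_) hzn
  rw [← dist_eq_norm]
  calc dist (deriv (deriv (g n)) w) (deriv (deriv ψ) 0)
      ≤ dist (deriv (deriv ψ) w) (deriv (deriv (g n)) w)
        + dist (deriv (deriv ψ) w) (deriv (deriv ψ) 0) := dist_triangle_left _ _ _
    _ ≤ ε / 2 + ε / 2 := add_le_add (hn w (hball hw).1.1).le (hball hw).2.le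
    _ = ε := add_halves ε

theorem tendsto_mul_sub_linear {ι : Type*} {l : Filter ι} {U : Set ℂ} (hU : IsOpen U)
    (h0 : 0 ∈ U) {g : ι → ℂ → ℂ} {ψ : ℂ → ℂ} (hg : ∀ᶠ n in l, DifferentiableOn ℂ (g n) U)
    (hlim : TendstoLocallyUniformlyOn g ψ l U) {a z : ι → ℂ} {w : ℂ} (hz : Tendsto z l (𝓝 0))
    (haz : Tendsto (fun n => a n * z n ^ 2) l (𝓝 w)) :
    Tendsto (fun n => a n * (g n (z n) - (g n 0 + deriv (g n) 0 * z n))) l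
      (𝓝 (deriv (deriv ψ) 0 / 2 * w)) := by
  have hrem : (fun n => a n * (g n (z n) -
      (g n 0 + deriv (g n) 0 * z n + deriv (deriv ψ) 0 / 2 * z n ^ 2))) =o[l] fun _ => (1 : ℂ) :=
    ((isBigO_refl a l).mul_isLittleO (isLittleO_sub_quadratic hU h0 hg hlim hz)).trans_isBigO
      (haz.isBigO_one ℂ)
  have := ((isLittleO_one_iff ℂ).1 hrem).add (haz.const_mul (deriv (deriv ψ) 0 / 2))
  rw [zero_add] at this
  exact this.congr fun n => by ring

end QuadraticApproximation

section LimitTheorem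

open MeasureTheory ProbabilityTheory Filter Set
open scoped Topology

/-- The law of `(X - 𝔼[X]) / √Var[X]` for a real random variable `X` with law `μ`, used to state
central limit theorems. It is the law of `0` when the variance vanishes. -/
noncomputable def standardization (μ : Measure ℝ) : Measure ℝ :=
  μ.map fun y => (√Var[id; μ])⁻¹ * (y - ∫ u, u ∂μ)

instance isProbabilityMeasure_standardization (μ : Measure ℝ) [IsProbabilityMeasure μ] :
    IsProbabilityMeasure (standardization μ) :=
  Measure.isProbabilityMeasure_map (by fun_prop)

theorem charFun_standardization (μ : Measure ℝ) (t : ℝ) :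
    charFun (standardization μ) t =
      complexMGF id μ (t / √Var[id; μ] * Complex.I)
        * Complex.exp (-(∫ u, u ∂μ : ℝ) * (t / √Var[id; μ] * Complex.I)) := by
  have hmap : standardization μ
      = (μ.map (· + -∫ u, u ∂μ)).map ((√Var[id; μ])⁻¹ * ·) := by
    rw [Measure.map_map (by fun_prop) (by fun_prop)]
    rfl
  rw [hmap, charFun_map_mul, charFun_map_add_const, inv_mul_eq_div, ← Complex.ofReal_div,
    complexMGF_id_mul_I]
  congr 2
  simp only [RCLike.inner_apply, conj_trivial]
  push_cast
  ring

theorem real_standardization_Iic {μ : Measure ℝ} (hμ : 0 < Var[id; μ]) (x : ℝ) :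
    (standardization μ).real (Iic x) = μ.real (Iic (∫ u, u ∂μ + x * √Var[id; μ])) := by
  rw [standardization, map_measureReal_apply (by fun_prop) measurableSet_Iic]
  congr 1
  ext y
  simp [inv_mul_le_iff₀' (Real.sqrt_pos.2 hμ), add_comm]

theorem tendsto_real_Iic_of_tendsto_charFun {μ : ℕ → Measure ℝ} [∀ n, IsProbabilityMeasure (μ n)]
    {ν : Measure ℝ} [IsProbabilityMeasure ν] [NullSingletonClass ν]
    (h : ∀ t, Tendsto (fun n => charFun (μ n) t) atTop (𝓝 (charFun ν t))) (x : ℝ) :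
    Tendsto (fun n => (μ n).real (Iic x)) atTop (𝓝 (ν.real (Iic x))) := by
  have hweak := ProbabilityMeasure.tendsto_of_tendsto_charFun
    (μ := fun n => ⟨μ n, inferInstance⟩) (μ₀ := ⟨ν, inferInstance⟩) h
  have := ProbabilityMeasure.tendsto_measure_of_null_frontier_of_tendsto' hweak (E := Iic x)
    (by simp)
  exact (ENNReal.tendsto_toReal (measure_ne_top ν _)).comp this

theorem charFun_standardization_of_complexMGF_eq_exp {μ : Measure ℝ} [IsProbabilityMeasure μ]
    {f : ℂ → ℂ} (hf : AnalyticAt ℂ f 0) (h : complexMGF id μ =ᶠ[𝓝 0] fun z => Complex.exp (f z))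
    (t : ℝ) {z : ℂ} (hz : z = t / √Var[id; μ] * Complex.I)
    (hfz : complexMGF id μ z = Complex.exp (f z)) :
    charFun (standardization μ) t = Complex.exp (f z - (f 0 + deriv f 0 * z)) := by
  have hexp0 : Complex.exp (f 0) = 1 := by simpa [complexMGF] using h.self_of_nhds.symm
  have hmean : deriv f 0 = (∫ u, u ∂μ : ℝ) :=
    (deriv_and_deriv_deriv_eq_of_complexMGF_eq_exp aemeasurable_id hf h).1
  rw [charFun_standardization, ← hz, hfz, ← hmean, ← sub_sub, sub_right_comm,
    Complex.exp_sub _ (f 0), hexp0, div_one, sub_eq_add_neg, ← neg_mul, Complex.exp_add]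

variable {μ : ℕ → Measure ℝ} [∀ n, IsProbabilityMeasure (μ n)] {U : Set ℂ} {g : ℕ → ℂ → ℂ}
  {ψ : ℂ → ℂ} {a : ℕ → ℝ} {v : ℝ}

theorem tendsto_variance_div_of_complexMGF_eq_exp (hU : IsOpen U) (h0 : 0 ∈ U)
    (ha : ∀ᶠ n in atTop, a n ≠ 0) (hg : ∀ᶠ n in atTop, DifferentiableOn ℂ (g n) U)
    (hM : ∀ᶠ n in atTop, EqOn (complexMGF id (μ n)) (fun z => Complex.exp (a n * g n z)) U)
    (hlim : TendstoLocallyUniformlyOn g ψ atTop U) (hψ : deriv (deriv ψ) 0 = v) :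
    Tendsto (fun n => Var[id; μ n] / a n) atTop (𝓝 v) := by
  have hlim2 : Tendsto (fun n => deriv (deriv (g n)) 0) atTop (𝓝 v) := hψ ▸
    ((hlim.deriv hg hU).deriv (hg.mono fun n hn => hn.deriv hU) hU).tendsto_at h0
  rw [← tendsto_ofReal_iff]
  refine hlim2.congr' ?_
  filter_upwards [ha, hg, hM] with n han hgn hMn
  have := (deriv_and_deriv_deriv_eq_of_complexMGF_eq_exp aemeasurable_id
    ((hgn.const_mul (a n : ℂ)).analyticAt (hU.mem_nhds h0))
    (hMn.eventuallyEq_of_mem (hU.mem_nhds h0))).2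
  simp only [deriv_const_mul_field'] at this
  simp [← this, han]

/-- The cumulant generating function of `μ n` is `a n * g n`, so the limit of the `g n` controls
the rescaled cumulants, and the third and higher ones disappear on standardizing. -/
theorem tendsto_charFun_standardization_of_complexMGF_eq_exp (hU : IsOpen U) (h0 : 0 ∈ U)
    (ha : Tendsto a atTop atTop) (hg : ∀ᶠ n in atTop, DifferentiableOn ℂ (g n) U)
    (hM : ∀ᶠ n in atTop, EqOn (complexMGF id (μ n)) (fun z => Complex.exp (a n * g n z)) U)
    (hlim : TendstoLocallyUniformlyOn g ψ atTop U) (hψ : deriv (deriv ψ) 0 = v) (hv : 0 < v)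
    (t : ℝ) :
    Tendsto (fun n => charFun (standardization (μ n)) t) atTop
      (𝓝 (charFun (gaussianReal 0 1) t)) := by
  have hvar := tendsto_variance_div_of_complexMGF_eq_exp hU h0 (ha.eventually_ne_atTop 0) hg hM
    hlim hψ
  set z : ℕ → ℂ := fun n => t / √Var[id; μ n] * Complex.I with hz_def
  have hz : Tendsto z atTop (𝓝 0) := by
    have hVar : Tendsto (fun n => Var[id; μ n]) atTop atTop :=
      (hvar.pos_mul_atTop hv ha).congr' <| (ha.eventually_ne_atTop 0).mono fun n hn =>
        div_mul_cancel₀ _ hn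
    have := (Real.tendsto_sqrt_atTop.comp hVar).const_div_atTop t
    simpa [hz_def] using (tendsto_ofReal_iff.2 this).mul_const Complex.I
  have haz : Tendsto (fun n => (a n : ℂ) * z n ^ 2) atTop (𝓝 ((-(t ^ 2 * v⁻¹) : ℝ) : ℂ)) := by
    refine (tendsto_ofReal_iff.2 ((hvar.inv₀ hv.ne').const_mul (t ^ 2)).neg).congr fun n => ?_
    rw [hz_def, mul_pow, Complex.I_sq, div_pow, ← Complex.ofReal_pow (√_),
      Real.sq_sqrt (variance_nonneg _ _), inv_div]
    push_cast
    ring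
  have hexponent := tendsto_mul_sub_linear hU h0 hg hlim hz haz
  have hlimit : deriv (deriv ψ) 0 / 2 * ((-(t ^ 2 * v⁻¹) : ℝ) : ℂ)
      = t * (0 : ℝ) * Complex.I - (1 : NNReal) * t ^ 2 / 2 := by
    have : (v : ℂ) ≠ 0 := by exact_mod_cast hv.ne'
    rw [hψ]
    push_cast
    field_simp
    ring
  rw [charFun_gaussianReal, ← hlimit]
  refine hexponent.cexp.congr' ?_
  filter_upwards [hg, hM, hz.eventually (hU.mem_nhds h0)] with n hgn hMn hzn
  rw [charFun_standardization_of_complexMGF_eq_exp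
    ((hgn.const_mul (a n : ℂ)).analyticAt (hU.mem_nhds h0))
    (hMn.eventuallyEq_of_mem (hU.mem_nhds h0)) t (z := z n) rfl (hMn hzn),
    deriv_const_mul_field']
  ring_nf

theorem tendsto_real_Iic_of_complexMGF_eq_exp (hU : IsOpen U) (h0 : 0 ∈ U)
    (ha : Tendsto a atTop atTop) (hg : ∀ᶠ n in atTop, DifferentiableOn ℂ (g n) U)
    (hM : ∀ᶠ n in atTop, EqOn (complexMGF id (μ n)) (fun z => Complex.exp (a n * g n z)) U)
    (hlim : TendstoLocallyUniformlyOn g ψ atTop U) (hψ : deriv (deriv ψ) 0 = v) (hv : 0 < v)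
    (x : ℝ) :
    Tendsto (fun n => (μ n).real (Iic (∫ u, u ∂μ n + x * √Var[id; μ n]))) atTop
      (𝓝 ((gaussianReal 0 1).real (Iic x))) := by
  have := nullSingletonClass_gaussianReal (μ := 0) one_ne_zero
  refine (tendsto_real_Iic_of_tendsto_charFun
    (tendsto_charFun_standardization_of_complexMGF_eq_exp hU h0 ha hg hM hlim hψ hv) x).congr' ?_
  have hvar := tendsto_variance_div_of_complexMGF_eq_exp hU h0 (ha.eventually_ne_atTop 0) hg hM
    hlim hψ
  filter_upwards [hvar.eventually_const_lt hv, ha.eventually_gt_atTop 0] with n hn han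
  exact real_standardization_Iic ((div_pos_iff_of_pos_right han).1 hn) x

end LimitTheorem

section QuasiPowers

open MeasureTheory ProbabilityTheory Filter Set
open scoped Topology

theorem tendstoUniformlyOn_add_div {ι E : Type*} {l : Filter ι} {V : Set E} {F : ι → E → ℂ}
    {a : ι → ℝ} {C : ℝ} (φ : E → ℂ) (ha : Tendsto a l atTop)
    (hF : ∀ᶠ n in l, ∀ z ∈ V, ‖F n z‖ ≤ C) :
    TendstoUniformlyOn (fun n z => φ z + F n z / a n) φ l V := by
  refine Metric.tendstoUniformlyOn_iff.2 fun ε hε => ?_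
  filter_upwards [hF, (ha.const_div_atTop C).eventually_lt_const hε, ha.eventually_gt_atTop 0]
    with n hn hCn han z hz
  calc dist (φ z) (φ z + F n z / a n) = ‖F n z‖ / a n := by
        rw [dist_self_add_right, norm_div, Complex.norm_of_nonneg han.le]
    _ ≤ C / a n := by gcongr; exact hn z hz
    _ < ε := hCn

theorem exists_isOpen_norm_div_sub_one_lt {ι E : Type*} [TopologicalSpace E] {l : Filter ι}
    {U : Set E} (hU : IsOpen U) {w : E} (hw : w ∈ U) {h : ι → E → ℂ} {α : E → ℂ}
    (hlim : TendstoLocallyUniformlyOn h α l U) (hα : ContinuousAt α w) (hαw : α w ≠ 0) {ε : ℝ}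
    (hε : 0 < ε) :
    ∃ V ⊆ U, IsOpen V ∧ w ∈ V ∧ ∀ᶠ n in l, ∀ z ∈ V, ‖h n z / α w - 1‖ < ε := by
  have hpos : 0 < ε / 2 * ‖α w‖ := by positivity
  obtain ⟨s, hs, hunif⟩ := Metric.tendstoLocallyUniformlyOn_iff.1 hlim _ hpos w hw
  rw [hU.nhdsWithin_eq hw] at hs
  obtain ⟨V, hV, hVo, hwV⟩ := mem_nhds_iff.1 <|
    inter_mem (inter_mem hs (hU.mem_nhds hw)) (hα (Metric.ball_mem_nhds _ hpos))
  refine ⟨V, fun z hz => (hV hz).1.2, hVo, hwV, hunif.mono fun n hn z hz => ?_⟩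
  have hdist : dist (h n z) (α w) < ε * ‖α w‖ := by
    calc dist (h n z) (α w) ≤ dist (α z) (h n z) + dist (α z) (α w) := dist_triangle_left _ _ _
      _ < ε / 2 * ‖α w‖ + ε / 2 * ‖α w‖ := add_lt_add (hn z (hV hz).1.1) (hV hz).2
      _ = ε * ‖α w‖ := by ring
  rwa [div_sub_one hαw, norm_div, div_lt_iff₀ (norm_pos_iff.2 hαw), ← dist_eq_norm]

theorem mem_slitPlane_of_norm_sub_one_lt_half {w : ℂ} (hw : ‖w - 1‖ < 1 / 2) :
    w ∈ Complex.slitPlane := by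
  simpa using Complex.mem_slitPlane_of_norm_lt_one (hw.trans one_half_lt_one)

theorem norm_log_le_one_of_norm_sub_one_lt_half {w : ℂ} (hw : ‖w - 1‖ < 1 / 2) :
    ‖Complex.log w‖ ≤ 1 := by
  have := Complex.norm_log_one_add_half_le_self hw.le
  rw [add_sub_cancel] at this
  linarith

variable {μ : ℕ → Measure ℝ} [∀ n, IsProbabilityMeasure (μ n)] {U : Set ℂ} {a : ℕ → ℝ}
  {c : ℕ → ℂ} {ψ : ℂ → ℂ} {v : ℝ}

theorem tendsto_real_Iic_of_complexMGF_eq_exp_add (hU : IsOpen U) (h0 : 0 ∈ U)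
    (ha : Tendsto a atTop atTop) (hψ : DifferentiableOn ℂ ψ U) {L : ℕ → ℂ → ℂ} {C : ℝ}
    (hL : ∀ᶠ n in atTop, DifferentiableOn ℂ (L n) U) (hLC : ∀ᶠ n in atTop, ∀ z ∈ U, ‖L n z‖ ≤ C)
    (hM : ∀ᶠ n in atTop, ∀ z ∈ U,
      c n * complexMGF id (μ n) z = Complex.exp (a n * ψ z + L n z))
    (hψv : deriv (deriv ψ) 0 = v) (hv : 0 < v) (x : ℝ) :
    Tendsto (fun n => (μ n).real (Iic (∫ u, u ∂μ n + x * √Var[id; μ n]))) atTop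
      (𝓝 ((gaussianReal 0 1).real (Iic x))) := by
  have hψv' : deriv (deriv fun z => ψ z - ψ 0) 0 = v := by
    rw [← hψv]
    congr 1
    exact funext fun z => deriv_sub_const (ψ 0)
  refine tendsto_real_Iic_of_complexMGF_eq_exp (μ := μ)
    (g := fun n z => ψ z - ψ 0 + (L n z - L n 0) / a n) (ψ := fun z => ψ z - ψ 0)
    hU h0 ha ?_ ?_ ?_ hψv' hv x
  · filter_upwards [hL] with n hn
    exact (hψ.sub_const _).add ((hn.sub_const _).div_const _)
  · filter_upwards [hM, ha.eventually_ne_atTop 0] with n hMn han z hz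
    have han' : (a n : ℂ) ≠ 0 := by exact_mod_cast han
    have hc : c n = Complex.exp (a n * ψ 0 + L n 0) := by simpa [complexMGF] using hMn 0 h0
    have hexponent : a n * (ψ z - ψ 0 + (L n z - L n 0) / a n)
        = (a n * ψ z + L n z) - (a n * ψ 0 + L n 0) := by
      field_simp
      ring
    beta_reduce
    rw [hexponent, Complex.exp_sub, ← hc, ← hMn z hz,
      mul_div_cancel_left₀ _ (hc ▸ Complex.exp_ne_zero _)]
  · refine (tendstoUniformlyOn_add_div (C := C + C) (fun z => ψ z - ψ 0) ha
      (hLC.mono fun n hn z hz => ?_)).tendstoLocallyUniformlyOn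
    exact (norm_sub_le _ _).trans (add_le_add (hn z hz) (hn 0 h0))

/-- Hwang's quasi-powers theorem, without a rate of convergence. -/
theorem tendsto_real_Iic_of_complexMGF_quasiPower (hU : IsOpen U) (h0 : 0 ∈ U)
    (ha : Tendsto a atTop atTop) {h : ℕ → ℂ → ℂ} {α : ℂ → ℂ} (hψ : DifferentiableOn ℂ ψ U)
    (hh : ∀ᶠ n in atTop, DifferentiableOn ℂ (h n) U)
    (hM : ∀ᶠ n in atTop, ∀ z ∈ U,
      c n * complexMGF id (μ n) z = Complex.exp (a n * ψ z) * h n z)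
    (hlim : TendstoLocallyUniformlyOn h α atTop U) (hα : α 0 ≠ 0)
    (hψv : deriv (deriv ψ) 0 = v) (hv : 0 < v) (x : ℝ) :
    Tendsto (fun n => (μ n).real (Iic (∫ u, u ∂μ n + x * √Var[id; μ n]))) atTop
      (𝓝 ((gaussianReal 0 1).real (Iic x))) := by
  have hαcont : ContinuousAt α 0 :=
    ((hlim.differentiableOn hh hU).differentiableAt (hU.mem_nhds h0)).continuousAt
  obtain ⟨V, hVU, hV, h0V, hclose⟩ :=
    exists_isOpen_norm_div_sub_one_lt hU h0 hlim hαcont hα one_half_pos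
  refine tendsto_real_Iic_of_complexMGF_eq_exp_add (c := fun n => c n / α 0) (C := 1)
    (L := fun n z => Complex.log (h n z / α 0)) hV h0V ha (hψ.mono hVU) ?_ ?_ ?_ hψv hv x
  · filter_upwards [hclose, hh] with n hn hhn
    exact ((hhn.mono hVU).div_const _).clog fun z hz =>
      mem_slitPlane_of_norm_sub_one_lt_half (hn z hz)
  · exact hclose.mono fun n hn z hz => norm_log_le_one_of_norm_sub_one_lt_half (hn z hz)
  · filter_upwards [hM, hclose] with n hMn hn z hz
    rw [Complex.exp_add, Complex.exp_log (Complex.slitPlane_ne_zero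
      (mem_slitPlane_of_norm_sub_one_lt_half (hn z hz))), ← mul_div_assoc, ← hMn z (hVU hz)]
    ring

end QuasiPowers

section UniformLaw

open MeasureTheory ProbabilityTheory Set
open scoped ENNReal

/-- The distribution of `X m` for `m` uniformly random in the finite set `s`. It is the zero
measure when `s` is empty. -/
noncomputable def uniformLaw {α : Type*} (s : Finset α) (X : α → ℝ) : Measure ℝ :=
  (s.card : ℝ≥0∞)⁻¹ • ∑ m ∈ s, Measure.dirac (X m)

variable {α : Type*} {s : Finset α} (X : α → ℝ)

theorem isProbabilityMeasure_uniformLaw (hs : s.Nonempty) :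
    IsProbabilityMeasure (uniformLaw s X) where
  measure_univ := by
    simpa [uniformLaw] using ENNReal.inv_mul_cancel (Nat.cast_ne_zero.2 hs.card_ne_zero)
      (ENNReal.natCast_ne_top s.card)

variable (s)

theorem integrable_uniformLaw (f : ℝ → ℝ) : Integrable f (uniformLaw s X) := by
  rcases s.eq_empty_or_nonempty with rfl | hs
  · simp [uniformLaw]
  · refine Integrable.smul_measure ?_ (by simpa using hs.ne_empty)
    exact integrable_finsetSum_measure.2 fun m _ => integrable_dirac (by simp)

theorem integral_uniformLaw {E : Type*} [NormedAddCommGroup E] [NormedSpace ℝ E] [CompleteSpace E]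
    (f : ℝ → E) : ∫ y, f y ∂uniformLaw s X = (s.card : ℝ)⁻¹ • ∑ m ∈ s, f (X m) := by
  rw [uniformLaw, integral_smul_measure,
    integral_finsetSum_measure fun m _ => integrable_dirac (by simp)]
  simp

theorem complexMGF_uniformLaw (z : ℂ) :
    complexMGF id (uniformLaw s X) z = (s.card : ℂ)⁻¹ * ∑ m ∈ s, Complex.exp (z * X m) := by
  rw [complexMGF, integral_uniformLaw, Complex.real_smul]
  simp

theorem variance_uniformLaw {s : Finset α} (hs : s.Nonempty) :
    Var[id; uniformLaw s X]
      = (s.card : ℝ)⁻¹ * ∑ m ∈ s, X m ^ 2 - ((s.card : ℝ)⁻¹ * ∑ m ∈ s, X m) ^ 2 := by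
  have := isProbabilityMeasure_uniformLaw X hs
  have hX : MemLp id 2 (uniformLaw s X) := (memLp_two_iff_integrable_sq (by fun_prop)).2
    (integrable_uniformLaw s X _)
  rw [variance_eq_sub hX]
  simp [integral_uniformLaw]

theorem real_Iic_uniformLaw (b : ℝ) :
    (uniformLaw s X).real (Iic b) = (s.card : ℝ)⁻¹ * ∑ m ∈ s, if X m ≤ b then 1 else 0 := by
  rw [← integral_indicator_one measurableSet_Iic, integral_uniformLaw, smul_eq_mul]
  simp [indicator_apply]

end UniformLaw

section GaussianDistributionFunction

open MeasureTheory ProbabilityTheory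

theorem real_gaussianReal_Iic (x : ℝ) :
    (gaussianReal 0 1).real (Set.Iic x)
      = (1 / √(2 * Real.pi)) * ∫ u in Set.Iic x, Real.exp (-u ^ 2 / 2) := by
  rw [measureReal_def, gaussianReal_apply_eq_integral 0 one_ne_zero, ENNReal.toReal_ofReal
    (integral_nonneg fun u => gaussianPDFReal_nonneg 0 1 u)]
  simp only [gaussianPDFReal]
  rw [integral_const_mul]
  simp

end GaussianDistributionFunction

section GeometricDecay

open Filter
open scoped Topology

theorem tendstoLocallyUniformlyOn_mul_pow {E : Type*} [TopologicalSpace E] {S : Set E}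
    {b ρ : E → ℂ} (hb : ContinuousOn b S) (hρ : ContinuousOn ρ S) (hρ1 : ∀ x ∈ S, ‖ρ x‖ < 1) :
    TendstoLocallyUniformlyOn (fun (n : ℕ) x => b x * ρ x ^ n) 0 atTop S := by
  refine Metric.tendstoLocallyUniformlyOn_iff.2 fun ε hε x hx => ?_
  obtain ⟨r, hxr, hr1⟩ := exists_between (hρ1 x hx)
  obtain ⟨C, hxC⟩ := exists_gt ‖b x‖
  have hr0 : 0 ≤ r := (norm_nonneg _).trans hxr.le
  refine ⟨{y | ‖b y‖ < C ∧ ‖ρ y‖ < r}, ((hb x hx).norm.eventually_lt_const hxC).and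
    ((hρ x hx).norm.eventually_lt_const hxr), ?_⟩
  have hpow := (tendsto_pow_atTop_nhds_zero_of_lt_one hr0 hr1).const_mul C
  rw [mul_zero] at hpow
  filter_upwards [hpow.eventually_lt_const hε] with n hn y hy
  calc dist (0 : ℂ) (b y * ρ y ^ n) = ‖b y‖ * ‖ρ y‖ ^ n := by
        rw [dist_zero_left, norm_mul, norm_pow]
    _ ≤ C * r ^ n := by
        exact mul_le_mul hy.1.le (pow_le_pow_left₀ (norm_nonneg _) hy.2.le n) (by positivity)
          ((norm_nonneg _).trans hxC.le)
    _ < ε := hn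

end GeometricDecay

section GrowthRate

open Filter Complex
open scoped Topology goldenRatio

/-- The metallic mean `(q + √(q² + 4)) / 2`, the root of `y² = q y + 1` extending the golden
ratio, which is its value at `q = 1`. The principal branch is used for the square root. -/
noncomputable def metallicMean (q : ℂ) : ℂ := (q + (q ^ 2 + 4) ^ (1 / 2 : ℂ)) / 2

theorem two_mul_metallicMean_sub_sq (q : ℂ) : (2 * metallicMean q - q) ^ 2 = q ^ 2 + 4 := by
  have : 2 * metallicMean q - q = (q ^ 2 + 4) ^ (1 / 2 : ℂ) := by
    rw [metallicMean]
    ring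
  rw [this, one_div, cpow_ofNat_inv_pow]

theorem metallicMean_sq (q : ℂ) : metallicMean q ^ 2 = q * metallicMean q + 1 := by
  linear_combination two_mul_metallicMean_sub_sq q / 4

theorem metallicMean_one : metallicMean 1 = φ := by
  have h5 : (1 ^ 2 + 4 : ℂ) ^ (1 / 2 : ℂ) = (√5 : ℝ) := by
    rw [Real.sqrt_eq_rpow, ofReal_cpow (by norm_num)]
    norm_num
  rw [metallicMean, h5, Real.goldenRatio]
  push_cast
  rfl

variable {q : ℂ}

theorem two_mul_metallicMean_sub_ne_zero (hq : q ^ 2 + 4 ∈ slitPlane) :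
    2 * metallicMean q - q ≠ 0 := by
  have := slitPlane_ne_zero hq
  rw [← two_mul_metallicMean_sub_sq] at this
  exact pow_ne_zero_iff two_ne_zero |>.1 this

theorem hasDerivAt_metallicMean (hq : q ^ 2 + 4 ∈ slitPlane) :
    HasDerivAt metallicMean (metallicMean q / (2 * metallicMean q - q)) q := by
  have hs := two_mul_metallicMean_sub_ne_zero hq
  have hdiff : DifferentiableAt ℂ metallicMean q :=
    (differentiableAt_id.add (((differentiableAt_pow 2).add_const 4).cpow_const hq)).div_const 2
  have hy := hdiff.hasDerivAt
  have hsq : HasDerivAt (fun u => metallicMean u ^ 2)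
      (1 * metallicMean q + q * deriv metallicMean q) q := by
    simp only [metallicMean_sq]
    exact ((hasDerivAt_id q).mul hy).add_const 1
  refine hy.congr_deriv ((eq_div_iff hs).2 ?_)
  linear_combination (hy.pow 2).unique hsq

/-- The exponential growth rate in `r` of the generating function of the decompositions of the
highest root of `C_r` by number of parts, as a function of the marking variable `q`. -/
noncomputable def growthRate (q : ℂ) : ℂ := q + metallicMean q ^ 2

theorem hasDerivAt_growthRate (hq : q ^ 2 + 4 ∈ slitPlane) :
    HasDerivAt growthRate (1 + 2 * metallicMean q ^ 2 / (2 * metallicMean q - q)) q := by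
  refine ((hasDerivAt_id q).add ((hasDerivAt_metallicMean hq).pow 2)).congr_deriv ?_
  push_cast
  ring

theorem growthRate_one : growthRate 1 = (φ + 2 : ℝ) := by
  rw [growthRate, metallicMean_one, ← ofReal_pow, Real.goldenRatio_sq]
  push_cast
  ring

theorem two_mul_metallicMean_one_sub_sq : (2 * metallicMean 1 - 1) ^ 2 = 5 := by
  rw [two_mul_metallicMean_sub_sq]
  norm_num

theorem one_sq_add_four_mem_slitPlane : (1 ^ 2 + 4 : ℂ) ∈ slitPlane := by
  left
  norm_num

theorem eventually_sq_add_four_mem_slitPlane : ∀ᶠ q : ℂ in 𝓝 1, q ^ 2 + 4 ∈ slitPlane :=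
  (by fun_prop : ContinuousAt (fun q : ℂ => q ^ 2 + 4) 1).eventually_mem
    (isOpen_slitPlane.mem_nhds one_sq_add_four_mem_slitPlane)

theorem growthRate_one_mem_slitPlane : growthRate 1 ∈ slitPlane := by
  rw [growthRate_one, ofReal_mem_slitPlane]
  linarith [Real.goldenRatio_pos]

/-- The open conditions under which the term with base `growthRate q` dominates the
generating function and analytic branches of the square root and the logarithm are available. -/
def dominanceRegion : Set ℂ :=
  {q | q ^ 2 + 4 ∈ slitPlane ∧ growthRate q ∈ slitPlane ∧
    ‖q + (q - metallicMean q) ^ 2‖ < ‖growthRate q‖ ∧ 1 < ‖growthRate q‖}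

theorem dominanceRegion_mem_nhds_one : dominanceRegion ∈ 𝓝 1 := by
  have h5 := one_sq_add_four_mem_slitPlane
  have hφ := Real.one_lt_goldenRatio
  have hy : ContinuousAt metallicMean 1 := (hasDerivAt_metallicMean h5).continuousAt
  have hl : ContinuousAt growthRate 1 := (hasDerivAt_growthRate h5).continuousAt
  have hm1 : (1 + (1 - metallicMean 1) ^ 2) = (3 - φ : ℝ) := by
    rw [metallicMean_one]
    norm_cast
    linear_combination Real.goldenRatio_sq
  have hm : ContinuousAt (fun q => q + (q - metallicMean q) ^ 2) 1 := by fun_prop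
  have hnorm : ‖growthRate 1‖ = φ + 2 := by
    rw [growthRate_one, Complex.norm_of_nonneg (by linarith)]
  filter_upwards [eventually_sq_add_four_mem_slitPlane,
    hl.eventually_mem (isOpen_slitPlane.mem_nhds growthRate_one_mem_slitPlane),
    hm.norm.eventually_lt hl.norm (by
      rw [hm1, hnorm, Complex.norm_of_nonneg (by linarith [Real.goldenRatio_lt_two])]
      linarith),
    hl.norm.eventually_const_lt (hnorm.symm ▸ (by linarith : 1 < φ + 2))] with q h1 h2 h3 h4
  exact ⟨h1, h2, h3, h4⟩

/-- The limit of `partitionGF (isPosRootC (n + 2)) q (thetaC (n + 2)) / growthRate q ^ n`. -/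
noncomputable def amplitude (q : ℂ) : ℂ :=
  q * (1 + q) * metallicMean q ^ 2 / (2 * metallicMean q - q)

theorem amplitude_one_ne_zero : amplitude 1 ≠ 0 := by
  have hs := two_mul_metallicMean_sub_ne_zero one_sq_add_four_mem_slitPlane
  have hφ : metallicMean 1 ≠ 0 := by
    rw [metallicMean_one]
    exact_mod_cast Real.goldenRatio_ne_zero
  rw [amplitude, one_mul, one_add_one_eq_two]
  exact div_ne_zero (mul_ne_zero two_ne_zero (pow_ne_zero 2 hφ)) hs

theorem partitionGF_thetaC_div_growthRate_pow (hs : 2 * metallicMean q - q ≠ 0)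
    (hl : growthRate q ≠ 0) (n : ℕ) :
    partitionGF (isPosRootC (n + 2)) q (thetaC (n + 2)) / growthRate q ^ n =
      amplitude q
        + -(q * (1 + q) * (q - metallicMean q) ^ 2 / (2 * metallicMean q - q))
          * ((q + (q - metallicMean q) ^ 2) / growthRate q) ^ n
        + q * (1 / growthRate q) ^ n := by
  have hGF := mul_partitionGF_thetaC_sub_eq q (metallicMean_sq q) n
  rw [← growthRate] at hGF
  have hln : growthRate q ^ n ≠ 0 := pow_ne_zero n hl
  rw [amplitude, div_pow, div_pow, one_pow]
  generalize 2 * metallicMean q - q = s at hs hGF ⊢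
  field_simp
  linear_combination hGF

theorem tendstoLocallyUniformlyOn_partitionGF_thetaC_div :
    TendstoLocallyUniformlyOn
      (fun (n : ℕ) q => partitionGF (isPosRootC (n + 2)) q (thetaC (n + 2)) / growthRate q ^ n)
      amplitude atTop dominanceRegion := by
  have hs : ∀ q ∈ dominanceRegion, 2 * metallicMean q - q ≠ 0 := fun q hq =>
    two_mul_metallicMean_sub_ne_zero hq.1
  have hl : ∀ q ∈ dominanceRegion, growthRate q ≠ 0 := fun q hq => slitPlane_ne_zero hq.2.1
  have hy : ContinuousOn metallicMean dominanceRegion := fun q hq =>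
    (hasDerivAt_metallicMean hq.1).continuousAt.continuousWithinAt
  have hg : ContinuousOn growthRate dominanceRegion := fun q hq =>
    (hasDerivAt_growthRate hq.1).continuousAt.continuousWithinAt
  have hconj := tendstoLocallyUniformlyOn_mul_pow (S := dominanceRegion)
    (b := fun q => -(q * (1 + q) * (q - metallicMean q) ^ 2 / (2 * metallicMean q - q)))
    (ρ := fun q => (q + (q - metallicMean q) ^ 2) / growthRate q)
    (by fun_prop (disch := assumption)) (by fun_prop (disch := assumption)) fun q hq => by
      rw [norm_div, div_lt_one (norm_pos_iff.2 (hl q hq))]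
      exact hq.2.2.1
  have hlin := tendstoLocallyUniformlyOn_mul_pow (S := dominanceRegion) (b := fun q => q)
    (ρ := fun q => 1 / growthRate q) (by fun_prop) (by fun_prop (disch := assumption))
    fun q hq => by
      rw [norm_div, norm_one, div_lt_one (norm_pos_iff.2 (hl q hq))]
      exact hq.2.2.2
  have hconst : TendstoLocallyUniformlyOn (fun _ : ℕ => amplitude) amplitude atTop
      dominanceRegion :=
    Metric.tendstoLocallyUniformlyOn_iff.2 fun _ hε _ _ =>
      ⟨_, self_mem_nhdsWithin, .of_forall fun _ _ _ => by simpa using hε⟩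
  refine (((hconst.add hconj).add hlin).congr fun n q hq => ?_).congr_right fun _ _ => ?_
  · exact (partitionGF_thetaC_div_growthRate_pow (hs q hq) (hl q hq) n).symm
  · simp

theorem hasDerivAt_deriv_growthRate (hq : q ^ 2 + 4 ∈ slitPlane) :
    HasDerivAt (deriv growthRate)
      (4 * metallicMean q ^ 2 / (2 * metallicMean q - q) ^ 2
        - 2 * q * metallicMean q ^ 2 / (2 * metallicMean q - q) ^ 3) q := by
  have hs := two_mul_metallicMean_sub_ne_zero hq
  have hy := hasDerivAt_metallicMean hq
  have hderiv : deriv growthRate =ᶠ[𝓝 q]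
      fun u => 1 + 2 * metallicMean u ^ 2 / (2 * metallicMean u - u) := by
    filter_upwards [(by fun_prop : ContinuousAt (fun u : ℂ => u ^ 2 + 4) q).eventually_mem
      (isOpen_slitPlane.mem_nhds hq)] with u hu
    exact (hasDerivAt_growthRate hu).deriv
  refine HasDerivAt.congr_of_eventuallyEq ?_ hderiv
  refine ((((hy.pow 2).const_mul 2).div ((hy.const_mul 2).sub (hasDerivAt_id q)) hs).const_add
    1).congr_deriv ?_
  simp only [Pi.sub_apply, Pi.pow_apply, id]
  generalize metallicMean q = y at hs ⊢
  generalize hsy : 2 * y - q = s at hs ⊢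
  obtain rfl : q = 2 * y - s := by linear_combination -hsy
  field_simp
  ring

theorem deriv_deriv_log_comp_exp_zero {g : ℂ → ℂ} (hg : AnalyticAt ℂ g 1)
    (h1 : g 1 ∈ slitPlane) :
    deriv (deriv fun z => log (g (exp z))) 0
      = ((deriv g 1 + deriv (deriv g) 1) * g 1 - deriv g 1 ^ 2) / g 1 ^ 2 := by
  have hexp : Tendsto exp (𝓝 0) (𝓝 1) := exp_zero ▸ continuous_exp.tendsto 0
  have hslit : ∀ᶠ q in 𝓝 1, g q ∈ slitPlane :=
    hg.continuousAt.eventually_mem (isOpen_slitPlane.mem_nhds h1)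
  have hderiv : (deriv fun z => log (g (exp z))) =ᶠ[𝓝 0]
      fun z => deriv g (exp z) * exp z / g (exp z) := by
    filter_upwards [hexp.eventually hg.eventually_analyticAt, hexp.eventually hslit] with z hz hzs
    exact ((hz.differentiableAt.hasDerivAt.comp z (hasDerivAt_exp z)).clog hzs).deriv
  have hcomp {f : ℂ → ℂ} (hf : AnalyticAt ℂ f 1) :
      HasDerivAt (fun z => f (exp z)) (deriv f 1) 0 := by
    have he := hasDerivAt_exp 0
    rw [exp_zero] at he
    exact (HasDerivAt.comp_of_eq 0 hf.differentiableAt.hasDerivAt he exp_zero.symm).congr_deriv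
      (mul_one _)
  have hg0 : g (exp 0) ≠ 0 := by
    rw [exp_zero]
    exact slitPlane_ne_zero h1
  have hquot := ((hcomp hg.deriv).mul (hasDerivAt_exp 0)).div (hcomp hg) hg0
  refine hderiv.deriv_eq.trans (hquot.deriv.trans ?_)
  simp only [Pi.mul_apply, exp_zero]
  ring

theorem deriv_deriv_log_growthRate_exp_zero :
    deriv (deriv fun z => log (growthRate (exp z))) 0 = (13 / 25 : ℝ) := by
  have h5 := one_sq_add_four_mem_slitPlane
  have hl : growthRate 1 ≠ 0 := slitPlane_ne_zero growthRate_one_mem_slitPlane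
  have hg : AnalyticAt ℂ growthRate 1 := analyticAt_iff_eventually_differentiableAt.2
    (eventually_sq_add_four_mem_slitPlane.mono fun _ hq =>
      (hasDerivAt_growthRate hq).differentiableAt)
  rw [deriv_deriv_log_comp_exp_zero hg growthRate_one_mem_slitPlane,
    (hasDerivAt_growthRate h5).deriv, (hasDerivAt_deriv_growthRate h5).deriv]
  have hy : metallicMean 1 ^ 2 = metallicMean 1 + 1 := by rw [metallicMean_sq, one_mul]
  have hs_inv : (2 * metallicMean 1 - 1)⁻¹ = (2 * metallicMean 1 - 1) / 5 := by
    rw [inv_eq_iff_eq_inv, inv_div, eq_div_iff (two_mul_metallicMean_sub_ne_zero h5)]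
    linear_combination two_mul_metallicMean_one_sub_sq
  rw [growthRate, hy] at hl ⊢
  rw [div_eq_mul_inv _ (2 * metallicMean 1 - 1), div_eq_mul_inv _ ((2 * metallicMean 1 - 1) ^ 2),
    div_eq_mul_inv _ ((2 * metallicMean 1 - 1) ^ 3), ← inv_pow, ← inv_pow, hs_inv]
  generalize metallicMean 1 = y at hy hl ⊢
  have hfst : 1 + 2 * (y + 1) * ((2 * y - 1) / 5) = (7 + 6 * y) / 5 := by
    linear_combination 4 / 5 * hy
  have hsnd : 4 * (y + 1) * ((2 * y - 1) / 5) ^ 2 - 2 * 1 * (y + 1) * ((2 * y - 1) / 5) ^ 3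
      = (18 + 14 * y) / 25 := by
    linear_combination
      (4 * (4 * (y + 1) / 25 - 2 * (y + 1) * (2 * y - 1) / 125) - 4 / 25) * hy
  rw [hfst, hsnd, div_eq_iff (pow_ne_zero 2 hl)]
  push_cast
  linear_combination -(1 / 5) * hy

end GrowthRate

section PartCount

open MeasureTheory ProbabilityTheory

/-- The distribution of the number of parts of a uniformly random decomposition of the highest
root of `C_r` into positive roots. -/
noncomputable def partCountLaw (r : ℕ) : Measure ℝ :=
  uniformLaw (vectorPartitions (isPosRootC r) (thetaC r)) fun m => m.card

theorem isPosRootC_thetaC (r : ℕ) : isPosRootC r (thetaC r) := by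
  refine Or.inr (Or.inr (funext fun t => ?_))
  have := t.isLt
  simp only [thetaC]
  split_ifs <;> omega

variable {r : ℕ}

theorem vectorPartitions_thetaC_nonempty (hr : r ≠ 0) :
    (vectorPartitions (isPosRootC r) (thetaC r)).Nonempty := by
  refine ⟨{thetaC r}, mem_vectorPartitions.2 ⟨fun v hv => ?_, Multiset.sum_singleton _⟩⟩
  rw [Multiset.mem_singleton] at hv
  exact hv ▸ ⟨ne_zero_of_isPosRootC hr (isPosRootC_thetaC r), isPosRootC_thetaC r⟩

theorem isProbabilityMeasure_partCountLaw (hr : r ≠ 0) :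
    IsProbabilityMeasure (partCountLaw r) :=
  isProbabilityMeasure_uniformLaw _ (vectorPartitions_thetaC_nonempty hr)

theorem tsum_pC (hr : r ≠ 0) :
    ∑' k, pC r k = (vectorPartitions (isPosRootC r) (thetaC r)).card := by
  simpa using tsum_mul_pC hr fun _ => 1

theorem muC_eq_integral_partCountLaw (hr : r ≠ 0) : muC r = ∫ u, u ∂partCountLaw r := by
  rw [muC, tsum_pC hr, tsum_mul_pC hr, partCountLaw, integral_uniformLaw, smul_eq_mul,
    div_eq_inv_mul]

theorem varC_eq_variance_partCountLaw (hr : r ≠ 0) : varC r = Var[id; partCountLaw r] := by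
  rw [varC, muC, tsum_pC hr, tsum_mul_pC hr fun k => k, tsum_mul_pC hr fun k => (k : ℝ) ^ 2,
    partCountLaw, variance_uniformLaw _ (vectorPartitions_thetaC_nonempty hr), div_eq_inv_mul,
    div_eq_inv_mul]

theorem tsum_ite_div_tsum_pC (hr : r ≠ 0) (b : ℝ) :
    (∑' k : ℕ, if (k : ℝ) ≤ b then pC r k else 0) / ∑' k, pC r k
      = (partCountLaw r).real (Set.Iic b) := by
  have hite := tsum_mul_pC hr fun k => if (k : ℝ) ≤ b then 1 else 0
  simp only [ite_mul, one_mul, zero_mul] at hite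
  rw [hite, tsum_pC hr, partCountLaw, real_Iic_uniformLaw, div_eq_inv_mul]

theorem tsum_pC_mul_complexMGF_partCountLaw (hr : r ≠ 0) (z : ℂ) :
    ((∑' k, pC r k : ℝ) : ℂ) * complexMGF id (partCountLaw r) z
      = partitionGF (isPosRootC r) (Complex.exp z) (thetaC r) := by
  have hcard := Nat.cast_ne_zero (R := ℂ).2 (vectorPartitions_thetaC_nonempty hr).card_ne_zero
  rw [tsum_pC hr, partCountLaw, complexMGF_uniformLaw, Complex.ofReal_natCast,
    mul_inv_cancel_left₀ hcard, partitionGF]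
  refine Finset.sum_congr rfl fun m _ => ?_
  rw [← Complex.exp_nat_mul, mul_comm, Complex.ofReal_natCast]

end PartCount

section CentralLimitTheorem

open Filter MeasureTheory ProbabilityTheory Set
open scoped Topology

theorem tendsto_real_Iic_partCountLaw (x : ℝ) :
    Tendsto (fun n => (partCountLaw (n + 2)).real
        (Iic (∫ u, u ∂partCountLaw (n + 2) + x * √Var[id; partCountLaw (n + 2)])))
      atTop (𝓝 ((gaussianReal 0 1).real (Iic x))) := by
  have (n : ℕ) : IsProbabilityMeasure (partCountLaw (n + 2)) :=
    isProbabilityMeasure_partCountLaw (by omega)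
  let U : Set ℂ := Complex.exp ⁻¹' interior dominanceRegion
  have hU : IsOpen U := isOpen_interior.preimage Complex.continuous_exp
  have h0 : (0 : ℂ) ∈ U := by
    rw [mem_preimage, Complex.exp_zero]
    exact mem_interior_iff_mem_nhds.2 dominanceRegion_mem_nhds_one
  have hexp : MapsTo Complex.exp U dominanceRegion := fun z hz => interior_subset hz
  have hdiff : DifferentiableOn ℂ (fun z => growthRate (Complex.exp z)) U := fun z hz =>
    ((hasDerivAt_growthRate (hexp hz).1).differentiableAt.comp z
      Complex.differentiableAt_exp).differentiableWithinAt
  have hl : ∀ z ∈ U, growthRate (Complex.exp z) ≠ 0 := fun z hz =>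
    Complex.slitPlane_ne_zero (hexp hz).2.1
  refine tendsto_real_Iic_of_complexMGF_quasiPower (a := fun n => (n : ℝ))
    (c := fun n => ((∑' k, pC (n + 2) k : ℝ) : ℂ)) hU h0 tendsto_natCast_atTop_atTop
    (hdiff.clog fun z hz => (hexp hz).2.1) (.of_forall fun n => ?_) (.of_forall fun n z hz => ?_)
    (tendstoLocallyUniformlyOn_partitionGF_thetaC_div.comp _ hexp
      Complex.continuous_exp.continuousOn) ?_ deriv_deriv_log_growthRate_exp_zero (by norm_num) x
  · simp only [partitionGF]
    exact (by fun_prop : Differentiable ℂ _).differentiableOn.div (hdiff.pow n)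
      fun z hz => pow_ne_zero n (hl z hz)
  · rw [tsum_pC_mul_complexMGF_partCountLaw (by omega), Complex.ofReal_natCast,
      Complex.exp_nat_mul, Complex.exp_log (hl z hz)]
    exact (mul_div_cancel₀ _ (pow_ne_zero n (hl z hz))).symm
  · simpa using amplitude_one_ne_zero

end CentralLimitTheorem

open Filter in
/-- Theorem 1.2, type `C_r` (Gaussian behavior): the normalized number of positive
roots used in the decompositions of the highest root of `C_r`, with mean `μ_r` and
standard deviation `σ_r = √(variance)`, converges in distribution to the standard
normal as `r → ∞`. -/
theorem gaussian_highestRoot_typeC (x : ℝ) :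
    Tendsto (fun r : ℕ =>
      (∑' k : ℕ, if (k : ℝ) ≤ muC r + x * Real.sqrt (varC r) then pC r k else 0) /
        (∑' k : ℕ, pC r k))
      atTop
      (nhds ((1 / Real.sqrt (2 * Real.pi)) * ∫ u in Set.Iic x, Real.exp (-u ^ 2 / 2))) := by
  rw [← tendsto_add_atTop_iff_nat 2, ← real_gaussianReal_Iic]
  refine (tendsto_real_Iic_partCountLaw x).congr fun n => ?_
  have hr : n + 2 ≠ 0 := by omega
  rw [tsum_ite_div_tsum_pC hr, muC_eq_integral_partCountLaw hr, varC_eq_variance_partCountLaw hr]
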